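/- Let T > 0, ν, μ ∈ (0,1], and M > 0. Let (u, B, P) be a smooth (jointly in (t,x)) solution, horizontally periodic in x for each t, of the viscous MHD system at every (t,x) ∈ [0,T] × ℝ³: ∂ₜu − νΔu + (curl u) × u + B × (curl B) + ∇P = 0, div u = 0, ∂ₜB − μΔB = curl(u × B), div B = 0, such that for every t ∈ [0,T]: u₃ = ∂₃u₁ = ∂₃u₂ = 0, B₁ = B₂ = 0, (ΔB)₁ = (ΔB)₂ = 0, and (curl Δu)₁ = (curl Δu)₂ = 0 at every point of ∂Ω. Let (u⁰, B⁰, P⁰) be a smooth, horizontally periodic solution of the ideal MHD system (the same system with ν = μ = 0) on [0,T] × ℝ³ such that for every t ∈ [0,T]: u⁰₃ = 0, (curl u⁰)₁ = (curl u⁰)₂ = 0, B⁰₁ = B⁰₂ = 0, and (ΔB⁰)₁ = (ΔB⁰)₂ = 0 at every point of ∂Ω. Assume u(0,x) = u⁰(0,x) and B(0,x) = B⁰(0,x) for all x with 0 ≤ x₃ ≤ 1, and that all partial derivatives in x of u, B, u⁰, B⁰ up to order 4 are bounded in absolute value by M on [0,T] × {x : 0 ≤ x₃ ≤ 1}. Then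 there exists a constant C, depending only on T and M and not on ν and μ, such that for every t ∈ [0,T]: ∫_Q (|u(t,x) − u⁰(t,x)|² + |Δ(u − u⁰)(t,x)|² + |B(t,x) − B⁰(t,x)|² + |Δ(B − B⁰)(t,x)|²) dx ≤ C(ν + μ). -/

import Mathlib

noncomputable section

open MeasureTheory

/-- Points/vectors in ℝ³, indexed by `Fin 3` (so index `0,1,2` stand for coordinates `1,2,3`). -/
abbrev V3 : Type := Fin 3 → ℝ

/-- Partial derivative in the `i`-th coordinate direction. -/
def pd (i : Fin 3) (f : V3 → ℝ) (x : V3) : ℝ := fderiv ℝ f x (Pi.single i 1)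

/-- Divergence of a vector field. -/
def vdiv (u : V3 → V3) (x : V3) : ℝ :=
  pd 0 (fun y => u y 0) x + pd 1 (fun y => u y 1) x + pd 2 (fun y => u y 2) x

/-- Curl of a vector field. -/
def vcurl (u : V3 → V3) (x : V3) : V3 :=
  ![pd 1 (fun y => u y 2) x - pd 2 (fun y => u y 1) x,
    pd 2 (fun y => u y 0) x - pd 0 (fun y => u y 2) x,
    pd 0 (fun y => u y 1) x - pd 1 (fun y => u y 0) x]

/-- Laplacian of a scalar function. -/
def lap (f : V3 → ℝ) (x : V3) : ℝ :=
  pd 0 (pd 0 f) x + pd 1 (pd 1 f) x + pd 2 (pd 2 f) x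

/-- Componentwise Laplacian of a vector field. -/
def vlap (u : V3 → V3) (x : V3) : V3 := fun i => lap (fun y => u y i) x

/-- Advective derivative `(u·∇)V`. -/
def adv (u V : V3 → V3) (x : V3) : V3 := fun i =>
  u x 0 * pd 0 (fun y => V y i) x + u x 1 * pd 1 (fun y => V y i) x +
    u x 2 * pd 2 (fun y => V y i) x

/-- Cross product in ℝ³. -/
def cross (a b : V3) : V3 :=
  ![a 1 * b 2 - a 2 * b 1, a 2 * b 0 - a 0 * b 2, a 0 * b 1 - a 1 * b 0]

/-- Dot product in ℝ³. -/
def dot (a b : V3) : ℝ := a 0 * b 0 + a 1 * b 1 + a 2 * b 2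

/-- Gradient of a scalar function. -/
def grad (f : V3 → ℝ) (x : V3) : V3 := fun i => pd i f x

/-- The boundary `∂Ω = {x : x₃ = 0 or x₃ = 1}`. -/
def onBdry (x : V3) : Prop := x 2 = 0 ∨ x 2 = 1

/-- Horizontal periodicity (period 1 in x₁ and x₂) of a scalar function. -/
def hperS (f : V3 → ℝ) : Prop :=
  (∀ x, f (x + Pi.single 0 1) = f x) ∧ (∀ x, f (x + Pi.single 1 1) = f x)

/-- Horizontal periodicity (period 1 in x₁ and x₂) of a vector field. -/
def hperV (u : V3 → V3) : Prop :=
  (∀ x, u (x + Pi.single 0 1) = u x) ∧ (∀ x, u (x + Pi.single 1 1) = u x)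

/-- The unit cube `Q = [0,1]³`. -/
def Q3 : Set V3 := Set.Icc 0 1

/-- Iterated partial derivative along a list of coordinate directions. -/
def pdList (l : List (Fin 3)) (f : V3 → ℝ) : V3 → ℝ := l.foldr pd f


/-- The algebra of smooth horizontally periodic functions. -/
def SPA : Subalgebra ℝ (V3 → ℝ) where
  carrier := {f | ContDiff ℝ (⊤ : ℕ∞) f ∧ hperS f}
  mul_mem' := by
    rintro f g ⟨hf, hf1, hf2⟩ ⟨hg, hg1, hg2⟩
    exact ⟨hf.mul hg, fun x => by simp [hf1, hg1], fun x => by simp [hf2, hg2]⟩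
  add_mem' := by
    rintro f g ⟨hf, hf1, hf2⟩ ⟨hg, hg1, hg2⟩
    exact ⟨hf.add hg, fun x => by simp [hf1, hg1], fun x => by simp [hf2, hg2]⟩
  algebraMap_mem' := by
    intro r
    exact ⟨contDiff_const, fun x => rfl, fun x => rfl⟩

lemma SPA_smooth (f : SPA) : ContDiff ℝ (⊤ : ℕ∞) f.1 := f.2.1

lemma SPA_diff (f : SPA) (x : V3) : DifferentiableAt ℝ f.1 x :=
  ((SPA_smooth f).differentiable (by simp)) x

lemma SPA_cont (f : SPA) : Continuous f.1 := (SPA_smooth f).continuous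

/-- smoothness of directional derivatives -/
lemma dir_smooth {E : Type*} [NormedAddCommGroup E] [NormedSpace ℝ E] {f : E → ℝ}
    (hf : ContDiff ℝ (⊤ : ℕ∞) f) (v : E) : ContDiff ℝ (⊤ : ℕ∞) (fun x => fderiv ℝ f x v) := by
  have := hf.fderiv_right (m := (⊤ : ℕ∞)) (by simp)
  exact this.clm_apply contDiff_const

lemma dir_comm {E : Type*} [NormedAddCommGroup E] [NormedSpace ℝ E] {f : E → ℝ}
    (hf : ContDiff ℝ (⊤ : ℕ∞) f) (v w : E) (x : E) :
    fderiv ℝ (fun y => fderiv ℝ f y v) x w = fderiv ℝ (fun y => fderiv ℝ f y w) x v := by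
  have hd : DifferentiableAt ℝ (fderiv ℝ f) x :=
    ((hf.fderiv_right (m := (⊤ : ℕ∞)) (by simp)).differentiable (by simp)) x
  have hs : IsSymmSndFDerivAt ℝ f x := by
    apply (hf.contDiffAt).isSymmSndFDerivAt
    simp only [minSmoothness_of_isRCLikeNormedField]
    exact (WithTop.coe_le_coe (b := (2 : ℕ∞)) (a := ⊤)).2 le_top
  have h1 : ∀ v, fderiv ℝ (fun y => fderiv ℝ f y v) x = (fderiv ℝ (fderiv ℝ f) x).flip v := by
    intro v
    ext w
    rw [fderiv_clm_apply hd (by fun_prop)]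
    simp
  rw [h1, h1]
  exact hs.eq w v

lemma pd_per {f : V3 → ℝ} (c : V3) (h : ∀ x, f (x + c) = f x) (i : Fin 3) (x : V3) :
    pd i f (x + c) = pd i f x := by
  unfold pd
  rw [← fderiv_comp_add_right]
  simp only [h]

/-- Partial derivative as linear map on the algebra. -/
def DD (i : Fin 3) : SPA →ₗ[ℝ] SPA where
  toFun f := ⟨pd i f.1, dir_smooth f.2.1 _, pd_per _ f.2.2.1 i, pd_per _ f.2.2.2 i⟩
  map_add' f g := by
    apply Subtype.ext
    funext x
    show fderiv ℝ (f.1 + g.1) x _ = fderiv ℝ f.1 x _ + fderiv ℝ g.1 x _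
    rw [fderiv_add (SPA_diff f x) (SPA_diff g x)]
    rfl
  map_smul' r f := by
    apply Subtype.ext
    funext x
    show fderiv ℝ (r • f.1) x _ = r • fderiv ℝ f.1 x _
    rw [fderiv_const_smul (SPA_diff f x)]
    rfl

lemma DD_coe (i : Fin 3) (f : SPA) : (DD i f).1 = pd i f.1 := rfl

lemma DD_mul (i : Fin 3) (f g : SPA) : DD i (f * g) = DD i f * g + f * DD i g := by
  apply Subtype.ext
  funext x
  show fderiv ℝ (f.1 * g.1) x _ = fderiv ℝ f.1 x _ * g.1 x + f.1 x * fderiv ℝ g.1 x _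
  rw [fderiv_mul (SPA_diff f x) (SPA_diff g x)]
  simp
  ring

lemma DD_comm (i j : Fin 3) (f : SPA) : DD i (DD j f) = DD j (DD i f) := by
  apply Subtype.ext
  funext x
  exact dir_comm f.2.1 _ _ x

lemma DD_const (i : Fin 3) (r : ℝ) : DD i (algebraMap ℝ SPA r) = 0 := by
  apply Subtype.ext
  funext x
  show fderiv ℝ (fun _ => r) x _ = 0
  simp

lemma Q3_compact : IsCompact Q3 := isCompact_Icc

lemma SPA_int (f : SPA) : IntegrableOn f.1 Q3 :=
  (SPA_cont f).continuousOn.integrableOn_compact Q3_compact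

/-- Integral over the cube. -/
def II : SPA →ₗ[ℝ] ℝ where
  toFun f := ∫ x in Q3, f.1 x
  map_add' f g := integral_add (SPA_int f) (SPA_int g)
  map_smul' r f := integral_const_mul r f.1

lemma II_mono {f g : SPA} (h : ∀ x ∈ Q3, f.1 x ≤ g.1 x) : II f ≤ II g :=
  setIntegral_mono_on (SPA_int f) (SPA_int g) measurableSet_Icc h

lemma II_const (r : ℝ) : II (algebraMap ℝ SPA r) = r := by
  show ∫ x in Q3, r = r
  rw [setIntegral_const]
  have : (volume : Measure V3).real Q3 = 1 := by
    simp [Q3, Measure.real, Real.volume_Icc_pi]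
  rw [this]; simp

lemma II_div (F : Fin 3 → SPA) (h : ∀ x, onBdry x → (F 2).1 x = 0) :
    II (∑ k, DD k (F k)) = 0 := by
  have key := integral_divergence_of_hasFDerivAt_off_countable' (n := 2) (E := ℝ) (0 : V3) 1
    (by intro i; simp) (fun i => (F i).1) (fun i x => fderiv ℝ (F i).1 x) ∅ Set.countable_empty
    (fun i => (SPA_cont (F i)).continuousOn) (fun x _ i => (SPA_diff (F i) x).hasFDerivAt)
    (by
      have := SPA_int (∑ k, DD k (F k))
      refine this.congr_fun ?_ measurableSet_Icc
      intro x _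
      simp [Fin.sum_univ_three]; rfl)
  have e1 : II (∑ k, DD k (F k)) = ∫ x in Set.Icc (0:V3) 1, ∑ i, fderiv ℝ (F i).1 x (Pi.single i 1) := by
    show ∫ x in Q3, _ = _
    congr 1
  rw [e1, key]
  have per : ∀ (i : Fin 3) (y : Fin 2 → ℝ),
      i.insertNth (α := fun _ => ℝ) ((1 : V3) i) y = i.insertNth (α := fun _ => ℝ) ((0 : V3) i) y + (Pi.single i 1 : V3) := by
    intro i y
    funext j
    refine Fin.succAboveCases i ?_ ?_ j
    · simp
    · intro j; simp
  apply Finset.sum_eq_zero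
  intro i _
  rw [sub_eq_zero]
  congr 1
  funext y
  fin_cases i
  · have := (F 0).2.2.1 ((0 : Fin 3).insertNth (α := fun _ => ℝ) ((0 : V3) 0) y)
    rw [← per] at this
    exact this
  · have := (F 1).2.2.2 ((1 : Fin 3).insertNth (α := fun _ => ℝ) ((0 : V3) 1) y)
    rw [← per] at this
    exact this
  · show (F 2).1 _ = (F 2).1 _
    rw [h _ (Or.inr ?_), h _ (Or.inl ?_)]
    · exact Fin.insertNth_apply_same (α := fun _ => ℝ) (2 : Fin 3) _ y
    · exact Fin.insertNth_apply_same (α := fun _ => ℝ) (2 : Fin 3) _ y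

/-- advection -/
def Adv (a : Fin 3 → SPA) (f : SPA) : SPA := ∑ j, a j * DD j f

/-- Laplacian -/
def Lap : SPA →ₗ[ℝ] SPA := ∑ k, (DD k) ∘ₗ (DD k)

lemma Lap_eq (f : SPA) : Lap f = ∑ k, DD k (DD k f) := by
  simp [Lap]

/-- commutator -/
def Com (a : Fin 3 → SPA) (f : SPA) : SPA :=
  ∑ j, Lap (a j) * DD j f + 2 * ∑ j, ∑ k, DD k (a j) * DD k (DD j f)

lemma Lap_comm (i : Fin 3) (f : SPA) : DD i (Lap f) = Lap (DD i f) := by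
  simp only [Lap_eq, map_sum]
  refine Finset.sum_congr rfl fun k _ => ?_
  rw [DD_comm i k, DD_comm i k]

lemma Lap_mul (f g : SPA) : Lap (f * g) = Lap f * g + 2 * ∑ k, DD k f * DD k g + f * Lap g := by
  simp only [Lap_eq, Fin.sum_univ_three, DD_mul, map_add]
  ring

lemma Lap_Adv (a : Fin 3 → SPA) (f : SPA) : Lap (Adv a f) = Adv a (Lap f) + Com a f := by
  unfold Adv Com
  simp only [map_sum, Lap_mul, Lap_comm, Finset.sum_add_distrib, Finset.mul_sum]
  ring

lemma tang {f : SPA} (h : ∀ x, onBdry x → f.1 x = 0) (i : Fin 3) (hi : i ≠ 2) :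
    ∀ x, onBdry x → (DD i f).1 x = 0 := by
  intro x hx
  show fderiv ℝ f.1 x (Pi.single i 1) = 0
  have h1 : HasDerivAt (fun s : ℝ => x + s • (Pi.single i 1 : V3)) (Pi.single i 1) 0 := by
    simpa using ((hasDerivAt_id (0:ℝ)).smul_const (Pi.single i 1 : V3)).const_add x
  have h2 : HasDerivAt (fun s : ℝ => f.1 (x + s • (Pi.single i 1 : V3)))
      (fderiv ℝ f.1 x (Pi.single i 1)) 0 := by
    have h3 : HasFDerivAt f.1 (fderiv ℝ f.1 x) (x + (0:ℝ) • (Pi.single i 1 : V3)) := by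
      simpa using (SPA_diff f x).hasFDerivAt
    exact h3.comp_hasDerivAt 0 h1
  have h4 : (fun s : ℝ => f.1 (x + s • (Pi.single i 1 : V3))) = fun _ => 0 := by
    funext s
    apply h
    have : (x + s • (Pi.single i 1 : V3)) 2 = x 2 := by
      simp [hi.symm]
    unfold onBdry
    rw [this]
    exact hx
  rw [h4] at h2
  exact h2.unique (hasDerivAt_const 0 0)

lemma ev_add (f g : SPA) (x : V3) : (f + g).1 x = f.1 x + g.1 x := rfl
lemma ev_sub (f g : SPA) (x : V3) : (f - g).1 x = f.1 x - g.1 x := rfl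
lemma ev_neg (f : SPA) (x : V3) : (-f).1 x = - f.1 x := rfl
lemma ev_mul (f g : SPA) (x : V3) : (f * g).1 x = f.1 x * g.1 x := rfl
lemma ev_smul (r : ℝ) (f : SPA) (x : V3) : (r • f).1 x = r * f.1 x := rfl
lemma ev_zero (x : V3) : (0 : SPA).1 x = 0 := rfl
lemma ev_two (x : V3) : (2 : SPA).1 x = 2 := rfl
lemma ev_alg (r : ℝ) (x : V3) : (algebraMap ℝ SPA r).1 x = r := rfl
lemma ev_sum (f : Fin 3 → SPA) (x : V3) : (∑ k, f k).1 x = ∑ k, (f k).1 x := by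
  simp only [Fin.sum_univ_three, ev_add]

lemma DD_two (i : Fin 3) : DD i 2 = 0 := by
  have := DD_const i 2
  rwa [map_ofNat] at this

lemma energy (u B g h gt ht ρ σ : Fin 3 → SPA) (r : SPA)
    (hu : ∑ k, DD k (u k) = 0) (hB : ∑ k, DD k (B k) = 0) (hg : ∑ k, DD k (g k) = 0)
    (bu : ∀ x, onBdry x → (u 2).1 x = 0) (bg : ∀ x, onBdry x → (g 2).1 x = 0)
    (bh : ∀ x, onBdry x → (h 0).1 x = 0 ∧ (h 1).1 x = 0)
    (e1 : ∀ i, gt i = ρ i - Adv u (g i) + Adv B (h i) - DD i r)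
    (e2 : ∀ i, ht i = σ i + Adv B (g i) - Adv u (h i)) :
    II (∑ i, (g i * gt i + h i * ht i)) = II (∑ i, (g i * ρ i + h i * σ i)) := by
  have key : (2:ℝ) • ∑ i, (g i * gt i + h i * ht i) = (2:ℝ) • ∑ i, (g i * ρ i + h i * σ i)
      + ∑ k, DD k (-(u k * ∑ i, (g i * g i + h i * h i)) + 2 * (B k * ∑ i, g i * h i)
        - 2 * (r * g k)) := by
    simp only [Fin.sum_univ_three] at hu hB hg ⊢
    simp only [two_smul, e1, e2, Adv, Fin.sum_univ_three, DD_mul, map_add, map_sub, map_neg,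
      DD_two]
    linear_combination (-(g 0 * g 0 + h 0 * h 0 + (g 1 * g 1 + h 1 * h 1) + (g 2 * g 2 + h 2 * h 2))) * (-1) * hu
      - 2 * (g 0 * h 0 + g 1 * h 1 + g 2 * h 2) * hB + 2 * r * hg
  have h2 := congrArg II key
  rw [map_add, II_div, map_smul, map_smul] at h2
  · simpa using h2
  · intro x hx
    simp only [ev_add, ev_sub, ev_neg, ev_mul, ev_two, Fin.sum_univ_three, bu x hx, bg x hx,
      (bh x hx).1, (bh x hx).2]
    ring

lemma ell (f : SPA) (hb : (∀ x, onBdry x → f.1 x = 0) ∨ (∀ x, onBdry x → (DD 2 f).1 x = 0)) :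
    II (f * f + ∑ k, DD k f * DD k f + ∑ j, ∑ k, DD j (DD k f) * DD j (DD k f))
      ≤ 2 * II (f * f + Lap f * Lap f) := by
  have h1 : II (∑ k, DD k f * DD k f) = - II (f * Lap f) := by
    have : ∑ k, DD k f * DD k f = - (f * Lap f) + ∑ k, DD k (f * DD k f) := by
      simp only [Lap_eq, Fin.sum_univ_three, DD_mul]
      ring
    rw [this, map_add, II_div, add_zero, map_neg]
    intro x hx
    rw [ev_mul]
    rcases hb with hb | hb <;> rw [hb x hx] <;> ring
  have h2 : II (∑ j, ∑ k, DD j (DD k f) * DD j (DD k f)) = II (Lap f * Lap f) := by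
    have : Lap f * Lap f = ∑ j, ∑ k, DD j (DD k f) * DD j (DD k f)
        + ∑ k, DD k (DD k f * Lap f - ∑ j, DD j f * DD j (DD k f)) := by
      simp only [Lap_eq, Fin.sum_univ_three, DD_mul, map_add, map_sub]
      simp only [DD_comm 1 0, DD_comm 2 0, DD_comm 2 1]
      ring
    rw [this, map_add, II_div, add_zero]
    intro x hx
    have e0 : ∀ i, i ≠ 2 → (DD i f).1 x * (DD i (DD 2 f)).1 x = 0 := by
      intro i hi
      rcases hb with hb | hb
      · rw [tang hb i hi x hx, zero_mul]
      · rw [tang hb i hi x hx, mul_zero]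
    have e1 : ∀ i, i ≠ 2 → (DD 2 f).1 x * (DD i (DD i f)).1 x = 0 := by
      intro i hi
      rcases hb with hb | hb
      · rw [tang (tang hb i hi) i hi x hx, mul_zero]
      · rw [hb x hx, zero_mul]
    simp only [Lap_eq, ev_sub, ev_add, ev_mul, Fin.sum_univ_three]
    linear_combination e1 0 (by decide) + e1 1 (by decide) - e0 0 (by decide) - e0 1 (by decide)
  have h3 : 2 * (- II (f * Lap f)) ≤ II (f * f + Lap f * Lap f) := by
    have : II ((-2:ℝ) • (f * Lap f)) ≤ II (f * f + Lap f * Lap f) := by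
      apply II_mono
      intro x _
      simp only [ev_smul, ev_add, ev_mul]
      nlinarith [sq_nonneg (f.1 x + (Lap f).1 x)]
    rw [map_smul, smul_eq_mul] at this
    linarith
  have h4 : 0 ≤ II (f * f) := by
    have := II_mono (f := 0) (g := f * f) (by intro x _; rw [ev_mul, ev_zero]; exact mul_self_nonneg _)
    simpa using this
  have h5 : 0 ≤ II (Lap f * Lap f) := by
    have := II_mono (f := 0) (g := Lap f * Lap f) (by intro x _; rw [ev_mul, ev_zero]; exact mul_self_nonneg _)
    simpa using this
  rw [map_add] at h3
  rw [map_add, map_add, h1, h2, map_add]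
  linarith

/-- derivatives up to order four bounded at a point -/
def Bdd (M : ℝ) (f : SPA) (x : V3) : Prop :=
  |f.1 x| ≤ M ∧ (∀ j, |(DD j f).1 x| ≤ M) ∧ (∀ j k, |(DD j (DD k f)).1 x| ≤ M) ∧
  (∀ j k l, |(DD j (DD k (DD l f))).1 x| ≤ M) ∧
  (∀ j k l m, |(DD j (DD k (DD l (DD m f)))).1 x| ≤ M)

/-- derivatives up to order two bounded at a point -/
def Bd2 (s : ℝ) (f : SPA) (x : V3) : Prop :=
  |f.1 x| ≤ s ∧ (∀ j, |(DD j f).1 x| ≤ s) ∧ (∀ j k, |(DD j (DD k f)).1 x| ≤ s)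

/-- sum of squares of derivatives up to order two -/
def Dn (f : SPA) : SPA :=
  f * f + ∑ k, DD k f * DD k f + ∑ j, ∑ k, DD j (DD k f) * DD j (DD k f)

lemma abs_sum3 (f : Fin 3 → ℝ) (c : ℝ) (h : ∀ j, |f j| ≤ c) : |∑ j, f j| ≤ 3 * c := by
  refine (Finset.abs_sum_le_sum_abs _ _).trans ?_
  refine (Finset.sum_le_sum fun j _ => h j).trans ?_
  simp

lemma abs_mul2 {a b A s : ℝ} (ha : |a| ≤ A) (hb : |b| ≤ s) : |a * b| ≤ A * s := by
  rw [abs_mul]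
  exact mul_le_mul ha hb (abs_nonneg _) ((abs_nonneg _).trans ha)

lemma Lap_bd {f : SPA} {x : V3} {s : ℝ} (h : ∀ k, |(DD k (DD k f)).1 x| ≤ s) :
    |(Lap f).1 x| ≤ 3 * s := by
  rw [Lap_eq, ev_sum]
  exact abs_sum3 _ _ h

lemma Lap_Lap_bd {f : SPA} {x : V3} {s : ℝ} (h : Bdd s f x) :
    |(Lap (Lap f)).1 x| ≤ 9 * s := by
  have : |(Lap (Lap f)).1 x| ≤ 3 * (3 * s) := by
    apply Lap_bd
    intro k
    rw [Lap_comm, Lap_comm]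
    exact Lap_bd fun j => h.2.2.2.2 j j k k
  linarith

lemma Adv_bd {a : Fin 3 → SPA} {f : SPA} {x : V3} {A s : ℝ} (ha : ∀ j, |(a j).1 x| ≤ A)
    (hf : ∀ j, |(DD j f).1 x| ≤ s) : |(Adv a f).1 x| ≤ 3 * (A * s) := by
  rw [Adv, ev_sum]
  exact abs_sum3 _ _ fun j => abs_mul2 (ha j) (hf j)

lemma Com_bd {a : Fin 3 → SPA} {f : SPA} {x : V3} {A s : ℝ} (ha : ∀ j, Bd2 A (a j) x)
    (hf : Bd2 s f x) : |(Com a f).1 x| ≤ 27 * (A * s) := by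
  have h1 : |(∑ j, Lap (a j) * DD j f).1 x| ≤ 3 * (3 * A * s) := by
    rw [ev_sum]
    exact abs_sum3 _ _ fun j => abs_mul2 (Lap_bd fun k => (ha j).2.2 k k) (hf.2.1 j)
  have h2 : |(∑ j, ∑ k, DD k (a j) * DD k (DD j f)).1 x| ≤ 3 * (3 * (A * s)) := by
    rw [ev_sum]
    refine abs_sum3 _ _ fun j => ?_
    rw [ev_sum]
    exact abs_sum3 _ _ fun k => abs_mul2 ((ha j).2.1 k) (hf.2.2 k j)
  have h3 : (Com a f).1 x = (∑ j, Lap (a j) * DD j f).1 x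
    + 2 * (∑ j, ∑ k, DD k (a j) * DD k (DD j f)).1 x := rfl
  rw [h3]
  rw [abs_le] at h1 h2 ⊢
  constructor <;> linarith

lemma Bdd.bd2 {M : ℝ} {f : SPA} {x : V3} (h : Bdd M f x) : Bd2 M f x := ⟨h.1, h.2.1, h.2.2.1⟩

lemma LapAdv_bd {a : Fin 3 → SPA} {f : SPA} {x : V3} {M s : ℝ} (ha : ∀ j, Bd2 s (a j) x)
    (hf : Bdd M f x) : |(Lap (Adv a f)).1 x| ≤ 36 * (M * s) := by
  have h1 : |(Adv a (Lap f)).1 x| ≤ 3 * (s * (3 * M)) := by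
    apply Adv_bd (fun j => (ha j).1)
    intro j
    rw [Lap_comm]
    exact Lap_bd fun k => hf.2.2.2.1 k k j
  have h2 := Com_bd ha hf.bd2
  rw [Lap_Adv, ev_add]
  rw [abs_le] at h1 h2 ⊢
  constructor <;> linarith

lemma Dn_ev (f : SPA) (x : V3) : (Dn f).1 x = f.1 x ^ 2 + ∑ k, (DD k f).1 x ^ 2
    + ∑ j, ∑ k, (DD j (DD k f)).1 x ^ 2 := by
  simp only [Dn, ev_add, ev_mul, Fin.sum_univ_three, pow_two]

lemma Dn_nonneg (f : SPA) (x : V3) : 0 ≤ (Dn f).1 x := by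
  rw [Dn_ev]; positivity

lemma Dn_bd {f : SPA} {x : V3} {S : ℝ} (h : (Dn f).1 x ≤ S) : Bd2 (Real.sqrt S) f x := by
  rw [Dn_ev] at h
  have h1 : 0 ≤ ∑ k, (DD k f).1 x ^ 2 := by positivity
  have h2 : 0 ≤ ∑ j, ∑ k, (DD j (DD k f)).1 x ^ 2 := by positivity
  have h0 : 0 ≤ f.1 x ^ 2 := by positivity
  refine ⟨Real.abs_le_sqrt (by linarith), fun j => Real.abs_le_sqrt ?_,
    fun j k => Real.abs_le_sqrt ?_⟩
  · have := Finset.single_le_sum (f := fun k => (DD k f).1 x ^ 2) (fun k _ => sq_nonneg _)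
      (Finset.mem_univ j)
    linarith
  · have a1 := Finset.single_le_sum (f := fun j => ∑ k, (DD j (DD k f)).1 x ^ 2)
      (fun k _ => by positivity) (Finset.mem_univ j)
    have a2 := Finset.single_le_sum (f := fun k => (DD j (DD k f)).1 x ^ 2)
      (fun k _ => by positivity) (Finset.mem_univ k)
    linarith

lemma main_est (M ν μ : ℝ) (hM : 0 < M) (hν : 0 ≤ ν) (hμ : 0 ≤ μ)
    (u B w b u0 B0 wt bt : Fin 3 → SPA) (q : SPA)
    (hu : ∑ k, DD k (u k) = 0) (hB : ∑ k, DD k (B k) = 0)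
    (hw : ∑ k, DD k (w k) = 0) (hb : ∑ k, DD k (b k) = 0)
    (cu : ∀ x, onBdry x → (u 2).1 x = 0)
    (cw : ∀ x, onBdry x → (w 2).1 x = 0)
    (cw' : ∀ x, onBdry x → (DD 2 (w 0)).1 x = 0 ∧ (DD 2 (w 1)).1 x = 0)
    (cb : ∀ x, onBdry x → (b 0).1 x = 0 ∧ (b 1).1 x = 0)
    (cb' : ∀ x, onBdry x → (Lap (b 0)).1 x = 0 ∧ (Lap (b 1)).1 x = 0)
    (e1 : ∀ i, wt i = ν • Lap (u i) - Adv u (w i) - Adv w (u0 i) + Adv B (b i) + Adv b (B0 i)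
      - DD i q)
    (e2 : ∀ i, bt i = μ • Lap (B i) + Adv B (w i) + Adv b (u0 i) - Adv u (b i) - Adv w (B0 i))
    (bu : ∀ x ∈ Q3, ∀ i, Bdd M (u i) x) (bB : ∀ x ∈ Q3, ∀ i, Bdd M (B i) x)
    (bu0 : ∀ x ∈ Q3, ∀ i, Bdd M (u0 i) x) (bB0 : ∀ x ∈ Q3, ∀ i, Bdd M (B0 i) x) :
    II (∑ i, (w i * wt i + b i * bt i)) + II (∑ i, (Lap (w i) * Lap (wt i) + Lap (b i) * Lap (bt i)))
      ≤ 4536 * M * (4 * II (∑ i, (w i * w i + Lap (w i) * Lap (w i) + b i * b i + Lap (b i) * Lap (b i)))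
        + (ν ^ 2 + μ ^ 2)) := by
  have E0 := energy u B w b wt bt
    (fun i => ν • Lap (u i) - Adv w (u0 i) + Adv b (B0 i))
    (fun i => μ • Lap (B i) + Adv b (u0 i) - Adv w (B0 i)) q hu hB hw cu cw cb
    (fun i => by rw [e1]; ring) (fun i => by rw [e2]; ring)
  have lw : ∀ x, onBdry x → (Lap (w 2)).1 x = 0 := by
    intro x hx
    have h0 := tang (tang cw 0 (by decide)) 0 (by decide) x hx
    have h1 := tang (tang cw 1 (by decide)) 1 (by decide) x hx
    have h2 : DD 2 (DD 2 (w 2)) = - DD 0 (DD 2 (w 0)) - DD 1 (DD 2 (w 1)) := by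
      have := congrArg (DD 2) hw
      simp only [Fin.sum_univ_three, map_add, map_zero] at this
      rw [DD_comm 0 2, DD_comm 1 2]
      linear_combination this
    have h3 := tang (fun x hx => (cw' x hx).1) 0 (by decide) x hx
    have h4 := tang (fun x hx => (cw' x hx).2) 1 (by decide) x hx
    rw [Lap_eq, Fin.sum_univ_three, h2]
    simp only [ev_add, ev_sub, ev_neg, h0, h1, h3, h4]
    ring
  have E2 := energy u B (fun i => Lap (w i)) (fun i => Lap (b i)) (fun i => Lap (wt i))
    (fun i => Lap (bt i))
    (fun i => ν • Lap (Lap (u i)) - Com u (w i) + Com B (b i) - Lap (Adv w (u0 i))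
      + Lap (Adv b (B0 i)))
    (fun i => μ • Lap (Lap (B i)) + Com B (w i) - Com u (b i) + Lap (Adv b (u0 i))
      - Lap (Adv w (B0 i))) (Lap q) hu hB
    (by simp only [Lap_comm, ← map_sum, hw, map_zero]) cu lw cb'
    (fun i => by
      simp only [e1, map_add, map_sub, map_smul]
      rw [Lap_Adv u, Lap_Adv B, ← Lap_comm]; ring)
    (fun i => by
      simp only [e2, map_add, map_sub, map_smul]
      rw [Lap_Adv u, Lap_Adv B]; ring)
  rw [E0, E2, ← map_add]
  set S : SPA := ∑ i, (Dn (w i) + Dn (b i)) with hS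
  set N : SPA := ∑ i, (w i * w i + Lap (w i) * Lap (w i) + b i * b i + Lap (b i) * Lap (b i)) with hN
  have hSN : II S ≤ 2 * II N := by
    have k0 : ∀ i, II (Dn (w i)) ≤ 2 * II (w i * w i + Lap (w i) * Lap (w i)) := by
      intro i
      apply ell
      fin_cases i
      · exact Or.inr fun x hx => (cw' x hx).1
      · exact Or.inr fun x hx => (cw' x hx).2
      · exact Or.inl cw
    have k1 : ∀ i, II (Dn (b i)) ≤ 2 * II (b i * b i + Lap (b i) * Lap (b i)) := by
      intro i
      apply ell
      fin_cases i
      · exact Or.inl fun x hx => (cb x hx).1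
      · exact Or.inl fun x hx => (cb x hx).2
      · right
        intro x hx
        have h2 : DD 2 (b 2) = - DD 0 (b 0) - DD 1 (b 1) := by
          simp only [Fin.sum_univ_three] at hb
          linear_combination hb
        show (DD 2 (b 2)).1 x = 0
        rw [h2]
        simp only [ev_sub, ev_neg, tang (fun x hx => (cb x hx).1) 0 (by decide) x hx,
          tang (fun x hx => (cb x hx).2) 1 (by decide) x hx]
        ring
    rw [hS, hN, map_sum, map_sum, Finset.mul_sum]
    refine Finset.sum_le_sum fun i _ => ?_
    have a0 := k0 i
    have a1 := k1 i
    simp only [map_add] at a0 a1 ⊢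
    linarith
  have hpt : ∀ x ∈ Q3, (∑ i, (w i * (ν • Lap (u i) - Adv w (u0 i) + Adv b (B0 i))
        + b i * (μ • Lap (B i) + Adv b (u0 i) - Adv w (B0 i)))
      + ∑ i, (Lap (w i) * (ν • Lap (Lap (u i)) - Com u (w i) + Com B (b i) - Lap (Adv w (u0 i))
      + Lap (Adv b (B0 i))) + Lap (b i) * (μ • Lap (Lap (B i)) + Com B (w i) - Com u (b i)
      + Lap (Adv b (u0 i)) - Lap (Adv w (B0 i))))).1 x
      ≤ ((4536 * M) • ((2:ℝ) • S + algebraMap ℝ SPA (ν ^ 2 + μ ^ 2))).1 x := by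
    intro x hx
    have hS0 : 0 ≤ S.1 x := by
      rw [hS, ev_sum]
      exact Finset.sum_nonneg fun i _ => add_nonneg (Dn_nonneg _ _) (Dn_nonneg _ _)
    have hSi : ∀ i, (Dn (w i)).1 x + (Dn (b i)).1 x ≤ S.1 x := by
      intro i
      rw [hS, ev_sum]
      exact Finset.single_le_sum (f := fun i => (Dn (w i) + Dn (b i)).1 x)
        (fun i _ => add_nonneg (Dn_nonneg _ _) (Dn_nonneg _ _)) (Finset.mem_univ i)
    set s := Real.sqrt (S.1 x) with hs
    have hss : s ^ 2 = S.1 x := Real.sq_sqrt hS0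
    have s0 : 0 ≤ s := Real.sqrt_nonneg _
    have dw : ∀ i, Bd2 s (w i) x := fun i => Dn_bd (by linarith [hSi i, Dn_nonneg (b i) x])
    have db : ∀ i, Bd2 s (b i) x := fun i => Dn_bd (by linarith [hSi i, Dn_nonneg (w i) x])
    have Ms : 0 ≤ M * s := by positivity
    have Mν : 0 ≤ M * ν := by positivity
    have Mμ : 0 ≤ M * μ := by positivity
    have r0 : ∀ i, |(ν • Lap (u i) - Adv w (u0 i) + Adv b (B0 i)).1 x| ≤ 126 * M * (s + ν + μ) := by
      intro i
      have a1 := abs_mul2 (abs_of_nonneg hν).le (Lap_bd fun k => (bu x hx i).2.2.1 k k)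
      have a2 := Adv_bd (fun j => (dw j).1) (bu0 x hx i).2.1
      have a3 := Adv_bd (fun j => (db j).1) (bB0 x hx i).2.1
      simp only [ev_add, ev_sub, ev_smul]
      rw [abs_le] at a1 a2 a3 ⊢
      constructor <;> linarith
    have r1 : ∀ i, |(μ • Lap (B i) + Adv b (u0 i) - Adv w (B0 i)).1 x| ≤ 126 * M * (s + ν + μ) := by
      intro i
      have a1 := abs_mul2 (abs_of_nonneg hμ).le (Lap_bd fun k => (bB x hx i).2.2.1 k k)
      have a2 := Adv_bd (fun j => (db j).1) (bu0 x hx i).2.1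
      have a3 := Adv_bd (fun j => (dw j).1) (bB0 x hx i).2.1
      simp only [ev_add, ev_sub, ev_smul]
      rw [abs_le] at a1 a2 a3 ⊢
      constructor <;> linarith
    have r2 : ∀ i, |(ν • Lap (Lap (u i)) - Com u (w i) + Com B (b i) - Lap (Adv w (u0 i))
      + Lap (Adv b (B0 i))).1 x| ≤ 126 * M * (s + ν + μ) := by
      intro i
      have a1 := abs_mul2 (abs_of_nonneg hν).le (Lap_Lap_bd (bu x hx i))
      have a2 := Com_bd (fun j => (bu x hx j).bd2) (dw i)
      have a3 := Com_bd (fun j => (bB x hx j).bd2) (db i)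
      have a4 := LapAdv_bd dw (bu0 x hx i)
      have a5 := LapAdv_bd db (bB0 x hx i)
      simp only [ev_add, ev_sub, ev_smul]
      rw [abs_le] at a1 a2 a3 a4 a5 ⊢
      constructor <;> linarith
    have r3 : ∀ i, |(μ • Lap (Lap (B i)) + Com B (w i) - Com u (b i)
      + Lap (Adv b (u0 i)) - Lap (Adv w (B0 i))).1 x| ≤ 126 * M * (s + ν + μ) := by
      intro i
      have a1 := abs_mul2 (abs_of_nonneg hμ).le (Lap_Lap_bd (bB x hx i))
      have a2 := Com_bd (fun j => (bB x hx j).bd2) (dw i)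
      have a3 := Com_bd (fun j => (bu x hx j).bd2) (db i)
      have a4 := LapAdv_bd db (bu0 x hx i)
      have a5 := LapAdv_bd dw (bB0 x hx i)
      simp only [ev_add, ev_sub, ev_smul]
      rw [abs_le] at a1 a2 a3 a4 a5 ⊢
      constructor <;> linarith
    have lift1 : ∀ {y : ℝ}, |y| ≤ s → |y| ≤ 3 * s := fun h => by linarith
    have t1 : ∀ i, (w i * (ν • Lap (u i) - Adv w (u0 i) + Adv b (B0 i))
        + b i * (μ • Lap (B i) + Adv b (u0 i) - Adv w (B0 i))).1 x
        ≤ 2 * (3 * s * (126 * M * (s + ν + μ))) := by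
      intro i
      have a1 := (abs_le.1 (abs_mul2 (lift1 (dw i).1) (r0 i))).2
      have a2 := (abs_le.1 (abs_mul2 (lift1 (db i).1) (r1 i))).2
      rw [ev_add, ev_mul, ev_mul]
      linarith
    have t2 : ∀ i, (Lap (w i) * (ν • Lap (Lap (u i)) - Com u (w i) + Com B (b i)
      - Lap (Adv w (u0 i))
      + Lap (Adv b (B0 i))) + Lap (b i) * (μ • Lap (Lap (B i)) + Com B (w i) - Com u (b i)
      + Lap (Adv b (u0 i)) - Lap (Adv w (B0 i)))).1 x
        ≤ 2 * (3 * s * (126 * M * (s + ν + μ))) := by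
      intro i
      have a1 := (abs_le.1 (abs_mul2 (Lap_bd fun k => (dw i).2.2 k k) (r2 i))).2
      have a2 := (abs_le.1 (abs_mul2 (Lap_bd fun k => (db i).2.2 k k) (r3 i))).2
      rw [ev_add, ev_mul, ev_mul]
      linarith
    rw [ev_add, ev_sum, ev_sum]
    have b1 := Finset.sum_le_sum fun i (_ : i ∈ Finset.univ) => t1 i
    have b2 := Finset.sum_le_sum fun i (_ : i ∈ Finset.univ) => t2 i
    refine (add_le_add b1 b2).trans ?_
    simp only [Finset.sum_const, Finset.card_univ, Fintype.card_fin, ev_smul, ev_add, ev_alg, ← hss]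
    have : s * (s + ν + μ) ≤ 2 * s ^ 2 + (ν ^ 2 + μ ^ 2) := by
      nlinarith [sq_nonneg (s - 2 * ν), sq_nonneg (s - 2 * μ), sq_nonneg ν, sq_nonneg μ]
    have := mul_le_mul_of_nonneg_left this (by positivity : 0 ≤ 4536 * M)
    norm_num
    linarith
  refine (II_mono hpt).trans ?_
  rw [map_smul, map_add, map_smul, II_const, smul_eq_mul, smul_eq_mul]
  apply mul_le_mul_of_nonneg_left _ (by positivity)
  linarith

/-- spacetime admissible functions -/
def Adm (F : ℝ × V3 → ℝ) : Prop :=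
  ContDiff ℝ (⊤ : ℕ∞) F ∧ ∀ t, hperS (fun y => F (t, y))

/-- time slice -/
def sl (F : ℝ × V3 → ℝ) (hF : Adm F) (t : ℝ) : SPA :=
  ⟨fun y => F (t, y), hF.1.comp (contDiff_const.prodMk contDiff_id), hF.2 t⟩

/-- time derivative -/
def TD (F : ℝ × V3 → ℝ) (z : ℝ × V3) : ℝ := fderiv ℝ F z (1, 0)

/-- space derivative -/
def XD (i : Fin 3) (F : ℝ × V3 → ℝ) (z : ℝ × V3) : ℝ := fderiv ℝ F z (0, Pi.single i 1)

/-- spacetime Laplacian in space -/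
def LapT (F : ℝ × V3 → ℝ) (z : ℝ × V3) : ℝ := ∑ k, XD k (XD k F) z

lemma pd_slice {F : ℝ × V3 → ℝ} (hF : ContDiff ℝ (⊤ : ℕ∞) F) (i : Fin 3) (t : ℝ) (x : V3) :
    pd i (fun y => F (t, y)) x = XD i F (t, x) := by
  have h1 : HasFDerivAt (fun y : V3 => (t, y)) (ContinuousLinearMap.inr ℝ ℝ V3) x :=
    hasFDerivAt_prodMk_right t x
  have h2 := ((hF.differentiable (by simp)) (t, x)).hasFDerivAt.comp x h1
  have h3 : fderiv ℝ (fun y => F (t, y)) x = (fderiv ℝ F (t, x)).comp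
    (ContinuousLinearMap.inr ℝ ℝ V3) := h2.fderiv
  unfold pd XD
  rw [h3]
  rfl

lemma hasDerivAt_slice {F : ℝ × V3 → ℝ} (hF : ContDiff ℝ (⊤ : ℕ∞) F) (t : ℝ) (x : V3) :
    HasDerivAt (fun s => F (s, x)) (TD F (t, x)) t := by
  have h1 : HasDerivAt (fun s : ℝ => (s, x)) ((1 : ℝ), (0 : V3)) t :=
    (hasDerivAt_id t).prodMk (hasDerivAt_const t x)
  exact ((hF.differentiable (by simp)) (t, x)).hasFDerivAt.comp_hasDerivAt t h1

lemma hper_shift {F : ℝ × V3 → ℝ} (hF : Adm F) (v : ℝ × V3) (t : ℝ) :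
    hperS (fun y => fderiv ℝ F (t, y) v) := by
  have key : ∀ c : V3, (∀ t x, F (t, x + c) = F (t, x)) → ∀ x,
      fderiv ℝ F (t, x + c) v = fderiv ℝ F (t, x) v := by
    intro c hc x
    have h0 : (t, x + c) = (t, x) + ((0 : ℝ), c) := by simp
    rw [h0, ← fderiv_comp_add_right]
    have : (fun z : ℝ × V3 => F (z + ((0 : ℝ), c))) = F := by
      funext ⟨a, y⟩
      simpa using hc a y
    rw [this]
  exact ⟨key _ fun t x => (hF.2 t).1 x, key _ fun t x => (hF.2 t).2 x⟩

lemma Adm.dir {F : ℝ × V3 → ℝ} (hF : Adm F) (v : ℝ × V3) : Adm (fun z => fderiv ℝ F z v) :=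
  ⟨dir_smooth hF.1 v, hper_shift hF v⟩

lemma Adm.td {F : ℝ × V3 → ℝ} (hF : Adm F) : Adm (TD F) := hF.dir _

lemma Adm.xd {F : ℝ × V3 → ℝ} (hF : Adm F) (i : Fin 3) : Adm (XD i F) := hF.dir _

lemma DD_sl {F : ℝ × V3 → ℝ} (hF : Adm F) (i : Fin 3) (t : ℝ) :
    DD i (sl F hF t) = sl (XD i F) (hF.xd i) t := by
  apply Subtype.ext
  funext x
  exact pd_slice hF.1 i t x

lemma Adm.lt {F : ℝ × V3 → ℝ} (hF : Adm F) : Adm (LapT F) := by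
  have e : LapT F = fun z => XD 0 (XD 0 F) z + XD 1 (XD 1 F) z + XD 2 (XD 2 F) z := by
    funext z
    simp [LapT, Fin.sum_univ_three]
  have a := (hF.xd 0).xd 0
  have b := (hF.xd 1).xd 1
  have c := (hF.xd 2).xd 2
  rw [e]
  refine ⟨(a.1.add b.1).add c.1, fun t => ⟨fun x => ?_, fun x => ?_⟩⟩
  · have h1 := (a.2 t).1 x
    have h2 := (b.2 t).1 x
    have h3 := (c.2 t).1 x
    simp only at h1 h2 h3 ⊢
    rw [h1, h2, h3]
  · have h1 := (a.2 t).2 x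
    have h2 := (b.2 t).2 x
    have h3 := (c.2 t).2 x
    simp only at h1 h2 h3 ⊢
    rw [h1, h2, h3]

lemma Lap_sl {F : ℝ × V3 → ℝ} (hF : Adm F) (t : ℝ) :
    Lap (sl F hF t) = sl (LapT F) hF.lt t := by
  rw [Lap_eq]
  simp only [DD_sl]
  apply Subtype.ext
  funext x
  rw [ev_sum]
  rfl

lemma TD_XD {F : ℝ × V3 → ℝ} (hF : Adm F) (i : Fin 3) : TD (XD i F) = XD i (TD F) := by
  funext z
  exact dir_comm hF.1 _ _ z

lemma TD_LT {F : ℝ × V3 → ℝ} (hF : Adm F) : TD (LapT F) = LapT (TD F) := by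
  funext z
  have hd : ∀ k, DifferentiableAt ℝ (XD k (XD k F)) z := fun k =>
    (((hF.xd k).xd k).1.differentiable (by simp)) z
  have e : LapT F = fun z => ∑ k, XD k (XD k F) z := rfl
  have : fderiv ℝ (LapT F) z = ∑ k, fderiv ℝ (XD k (XD k F)) z := by
    rw [e]
    exact fderiv_fun_sum fun k _ => hd k
  unfold TD
  rw [this, ContinuousLinearMap.sum_apply]
  refine Finset.sum_congr rfl fun k _ => ?_
  change TD (XD k (XD k F)) z = XD k (XD k (TD F)) z
  rw [TD_XD (hF.xd k), TD_XD hF]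

lemma param {G : ℝ × V3 → ℝ} (hG : ContDiff ℝ (⊤ : ℕ∞) G) (t : ℝ) :
    HasDerivAt (fun s => ∫ x in Q3, G (s, x)) (∫ x in Q3, TD G (t, x)) t := by
  have hc : Continuous (TD G) := (dir_smooth hG _).continuous
  obtain ⟨C, hC⟩ := ((isCompact_Icc (a := t - 1) (b := t + 1)).prod Q3_compact).exists_bound_of_continuousOn
    (f := TD G) hc.continuousOn
  have hGc : ∀ s, Continuous fun x => G (s, x) := fun s => hG.continuous.comp (by fun_prop)
  have hTc : ∀ s, Continuous fun x => TD G (s, x) := fun s => hc.comp (by fun_prop)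
  refine (hasDerivAt_integral_of_dominated_loc_of_deriv_le (μ := volume.restrict Q3)
    (F := fun s x => G (s, x)) (F' := fun s x => TD G (s, x)) (bound := fun _ => C)
    (s := Set.Icc (t - 1) (t + 1)) (Icc_mem_nhds (by linarith) (by linarith))
    (Filter.Eventually.of_forall fun s => (hGc s).aestronglyMeasurable)
    ((hGc t).continuousOn.integrableOn_compact Q3_compact)
    ((hTc t).aestronglyMeasurable) ?_ ?_ ?_).2
  · refine (ae_restrict_iff' measurableSet_Icc).2 (Filter.Eventually.of_forall fun x hx s hs => ?_)
    exact hC (s, x) ⟨hs, hx⟩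
  · exact continuousOn_const.integrableOn_compact Q3_compact
  · exact Filter.Eventually.of_forall fun x s _ => hasDerivAt_slice hG s x

lemma sq_deriv {F : ℝ × V3 → ℝ} (hF : Adm F) (t : ℝ) :
    HasDerivAt (fun s => II (sl F hF s * sl F hF s)) (2 * II (sl F hF t * sl (TD F) hF.td t)) t := by
  have h := param (hF.1.mul hF.1) t
  have e : 2 * II (sl F hF t * sl (TD F) hF.td t) = ∫ x in Q3, TD (fun z => F z * F z) (t, x) := by
    rw [← smul_eq_mul, ← map_smul]
    show ∫ x in Q3, _ = _
    congr 1
    funext x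
    have h1 := (hasDerivAt_slice hF.1 t x).mul (hasDerivAt_slice hF.1 t x)
    have h2 := hasDerivAt_slice (hF.1.mul hF.1) t x
    have h3 := h2.unique h1
    rw [h3, ev_smul, ev_mul]
    show 2 * (F (t, x) * TD F (t, x)) = _
    ring
  rw [e]
  exact h

lemma lap_deriv {F : ℝ × V3 → ℝ} (hF : Adm F) (t : ℝ) :
    HasDerivAt (fun s => II (Lap (sl F hF s) * Lap (sl F hF s)))
      (2 * II (Lap (sl F hF t) * Lap (sl (TD F) hF.td t))) t := by
  simp only [Lap_sl]
  have e : sl (LapT (TD F)) hF.td.lt t = sl (TD (LapT F)) hF.lt.td t := by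
    apply Subtype.ext
    funext x
    show LapT (TD F) (t, x) = TD (LapT F) (t, x)
    rw [TD_LT hF]
  rw [e]
  exact sq_deriv hF.lt t

/-- energy at time `t` -/
def EN (w b : Fin 3 → SPA) : SPA :=
  ∑ i, (w i * w i + Lap (w i) * Lap (w i) + b i * b i + Lap (b i) * Lap (b i))

lemma EN_deriv (W B : Fin 3 → ℝ × V3 → ℝ) (hW : ∀ i, Adm (W i)) (hB : ∀ i, Adm (B i)) (t : ℝ) :
    HasDerivAt (fun s => II (EN (fun i => sl (W i) (hW i) s) (fun i => sl (B i) (hB i) s)))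
      (2 * (II (∑ i, (sl (W i) (hW i) t * sl (TD (W i)) (hW i).td t
          + sl (B i) (hB i) t * sl (TD (B i)) (hB i).td t))
        + II (∑ i, (Lap (sl (W i) (hW i) t) * Lap (sl (TD (W i)) (hW i).td t)
          + Lap (sl (B i) (hB i) t) * Lap (sl (TD (B i)) (hB i).td t))))) t := by
  have h : HasDerivAt (fun s => ∑ i, (II (sl (W i) (hW i) s * sl (W i) (hW i) s)
      + II (Lap (sl (W i) (hW i) s) * Lap (sl (W i) (hW i) s))
      + II (sl (B i) (hB i) s * sl (B i) (hB i) s)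
      + II (Lap (sl (B i) (hB i) s) * Lap (sl (B i) (hB i) s))))
      (∑ i, (2 * II (sl (W i) (hW i) t * sl (TD (W i)) (hW i).td t)
      + 2 * II (Lap (sl (W i) (hW i) t) * Lap (sl (TD (W i)) (hW i).td t))
      + 2 * II (sl (B i) (hB i) t * sl (TD (B i)) (hB i).td t)
      + 2 * II (Lap (sl (B i) (hB i) t) * Lap (sl (TD (B i)) (hB i).td t)))) t :=
    HasDerivAt.fun_sum fun i _ => (((sq_deriv (hW i) t).add (lap_deriv (hW i) t)).add
      (sq_deriv (hB i) t)).add (lap_deriv (hB i) t)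
  convert h using 1
  · funext s
    simp only [EN, map_sum, map_add]
  · simp only [map_add, Fin.sum_univ_three]
    ring

/-- vanishing on the open slab -/
def VO (f : SPA) : Prop := ∀ x : V3, 0 < x 2 → x 2 < 1 → f.1 x = 0

lemma VO.dd {f : SPA} (h : VO f) (i : Fin 3) : VO (DD i f) := by
  intro x h0 h1
  have hev : f.1 =ᶠ[nhds x] fun _ => 0 := by
    have c : ContinuousAt (fun y : V3 => y 2) x := (continuous_apply 2).continuousAt
    filter_upwards [c.eventually (lt_mem_nhds h0), c.eventually (gt_mem_nhds h1)] with y a b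
    exact h y a b
  show fderiv ℝ f.1 x _ = 0
  rw [hev.fderiv_eq]
  simp

lemma VO.lap {f : SPA} (h : VO f) : VO (Lap f) := by
  intro x h0 h1
  rw [Lap_eq, ev_sum]
  exact Finset.sum_eq_zero fun k _ => (h.dd k).dd k x h0 h1

lemma EN_zero (w b : Fin 3 → SPA) (hw : ∀ i, VO (w i)) (hb : ∀ i, VO (b i)) :
    II (EN w b) = 0 := by
  show ∫ x in Set.Icc (0 : V3) 1, _ = 0
  rw [volume_pi, ← setIntegral_congr_set Measure.univ_pi_Ioo_ae_eq_Icc]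
  apply setIntegral_eq_zero_of_forall_eq_zero
  intro x hx
  have h := hx 2 (Set.mem_univ _)
  have h0 : 0 < x 2 := h.1
  have h1 : x 2 < 1 := h.2
  rw [EN, ev_sum]
  apply Finset.sum_eq_zero
  intro i _
  simp only [ev_add, ev_mul, hw i x h0 h1, hb i x h0 h1, (hw i).lap x h0 h1, (hb i).lap x h0 h1]
  ring

lemma br1 (V : Fin 3 → SPA) (x : V3) (i : Fin 3) :
    cross (vcurl (fun y i => (V i).1 y) x) (fun i => (V i).1 x) i
      = (Adv V (V i) - (1 / 2 : ℝ) • DD i (∑ k, V k * V k)).1 x := by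
  fin_cases i <;>
  simp [cross, vcurl, Adv, Fin.sum_univ_three, DD_mul, ev_add, ev_sub, ev_smul, ev_mul, ← DD_coe,
    -SetLike.coe_eq_coe] <;> ring

lemma br2 (V : Fin 3 → SPA) (x : V3) (i : Fin 3) :
    cross (fun i => (V i).1 x) (vcurl (fun y i => (V i).1 y) x) i
      = - (Adv V (V i) - (1 / 2 : ℝ) • DD i (∑ k, V k * V k)).1 x := by
  rw [← br1]
  fin_cases i <;> simp [cross] <;> ring

lemma br3 (U B : Fin 3 → SPA) (hU : ∑ k, DD k (U k) = 0) (hB : ∑ k, DD k (B k) = 0)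
    (x : V3) (i : Fin 3) :
    vcurl (fun y => cross (fun i => (U i).1 y) (fun i => (B i).1 y)) x i
      = (Adv B (U i) - Adv U (B i)).1 x := by
  have h : ∀ j k : Fin 3, ∀ l, pd l (fun y => (U j).1 y * (B k).1 y - (U k).1 y * (B j).1 y) x
      = (DD l (U j * B k - U k * B j)).1 x := fun j k l => rfl
  have h1 : (∑ k, DD k (U k)).1 x = 0 := by rw [hU]; rfl
  have h2 : (∑ k, DD k (B k)).1 x = 0 := by rw [hB]; rfl
  simp only [Fin.sum_univ_three, ev_add] at h1 h2
  fin_cases i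
  · show pd 1 (fun y => (U 0).1 y * (B 1).1 y - (U 1).1 y * (B 0).1 y) x
      - pd 2 (fun y => (U 2).1 y * (B 0).1 y - (U 0).1 y * (B 2).1 y) x = (Adv B (U 0) - Adv U (B 0)).1 x
    rw [h, h]
    simp only [Adv, Fin.sum_univ_three, map_sub, DD_mul, ev_add, ev_sub, ev_mul]
    linear_combination (U 0).1 x * h2 - (B 0).1 x * h1
  · show pd 2 (fun y => (U 1).1 y * (B 2).1 y - (U 2).1 y * (B 1).1 y) x
      - pd 0 (fun y => (U 0).1 y * (B 1).1 y - (U 1).1 y * (B 0).1 y) x = (Adv B (U 1) - Adv U (B 1)).1 x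
    rw [h, h]
    simp only [Adv, Fin.sum_univ_three, map_sub, DD_mul, ev_add, ev_sub, ev_mul]
    linear_combination (U 1).1 x * h2 - (B 1).1 x * h1
  · show pd 0 (fun y => (U 2).1 y * (B 0).1 y - (U 0).1 y * (B 2).1 y) x
      - pd 1 (fun y => (U 1).1 y * (B 2).1 y - (U 2).1 y * (B 1).1 y) x = (Adv B (U 2) - Adv U (B 2)).1 x
    rw [h, h]
    simp only [Adv, Fin.sum_univ_three, map_sub, DD_mul, ev_add, ev_sub, ev_mul]
    linear_combination (U 2).1 x * h2 - (B 2).1 x * h1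

lemma Lap_ev (f : SPA) (x : V3) : (Lap f).1 x = lap f.1 x := by
  rw [Lap_eq, Fin.sum_univ_three]
  rfl

lemma Adv_sub (a b c d : Fin 3 → SPA) (i : Fin 3) :
    Adv a (c i) - Adv b (d i) = Adv a (c i - d i) + Adv (fun i => a i - b i) (d i) := by
  simp only [Adv, Fin.sum_univ_three, map_sub]
  ring

lemma gron (E E' : ℝ → ℝ) (K ε T : ℝ) (hK : 0 < K) (hE : ∀ t, HasDerivAt E (E' t) t)
    (h0 : E 0 = 0) (hb : ∀ t ∈ Set.Icc 0 T, E' t ≤ K * E t + ε) :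
    ∀ t ∈ Set.Icc 0 T, E t ≤ ε / K * (Real.exp (K * t) - 1) := by
  intro t ht
  have := le_gronwallBound_of_liminf_deriv_right_le (f := E) (f' := E') (δ := 0) (K := K) (ε := ε)
    (a := 0) (b := T) (fun t _ => (hE t).continuousAt.continuousWithinAt)
    (fun x _ r hr => by
      have := (hE x).hasDerivWithinAt.liminf_right_slope_le (x := x) hr
      simpa [slope_def_field, div_eq_inv_mul] using this) h0.le
    (fun x hx => hb x ⟨hx.1, hx.2.le⟩) t ht
  rw [gronwallBound_of_K_ne_0 hK.ne'] at this
  simpa using this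

lemma adm_comp (v : ℝ → V3 → V3) (hv : ContDiff ℝ (⊤ : ℕ∞) (Function.uncurry v))
    (hp : ∀ t, hperV (v t)) (i : Fin 3) : Adm (fun z => v z.1 z.2 i) :=
  ⟨(contDiff_pi.1 hv) i, fun t => ⟨fun x => congrFun ((hp t).1 x) i,
    fun x => congrFun ((hp t).2 x) i⟩⟩

lemma adm_sub {F G : ℝ × V3 → ℝ} (hF : Adm F) (hG : Adm G) : Adm (fun z => F z - G z) :=
  ⟨hF.1.sub hG.1, fun t => ⟨fun x => congrArg₂ (· - ·) ((hF.2 t).1 x) ((hG.2 t).1 x),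
    fun x => congrArg₂ (· - ·) ((hF.2 t).2 x) ((hG.2 t).2 x)⟩⟩

lemma TD_sub {F G : ℝ × V3 → ℝ} (hF : Adm F) (hG : Adm G) (t : ℝ) :
    sl (TD (fun z => F z - G z)) (adm_sub hF hG).td t = sl (TD F) hF.td t - sl (TD G) hG.td t := by
  apply Subtype.ext
  funext x
  exact (hasDerivAt_slice (adm_sub hF hG).1 t x).unique
    ((hasDerivAt_slice hF.1 t x).sub (hasDerivAt_slice hG.1 t x))

lemma bdd_of {M : ℝ} {f : SPA} {x : V3}
    (h : ∀ l : List (Fin 3), l.length ≤ 4 → |pdList l f.1 x| ≤ M) : Bdd M f x :=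
  ⟨h [] (by simp), fun j => h [j] (by simp), fun j k => h [j, k] (by simp),
    fun j k l => h [j, k, l] (by simp), fun j k l m => h [j, k, l, m] (by simp)⟩

/-- Convergence rate: for the viscous MHD solution `(u,B,P)` (with the extra boundary
conditions) and the ideal MHD solution `(u⁰,B⁰,P⁰)` with the same initial data on the slab,
whose spatial derivatives up to order 4 are bounded by `M`, there is `C = C(T,M)`,
independent of `ν, μ ∈ (0,1]`, with
`∫_Q (|u−u⁰|² + |Δ(u−u⁰)|² + |B−B⁰|² + |Δ(B−B⁰)|²) dx ≤ C(ν+μ)` on `[0,T]`. -/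
theorem stmt_18 (T M : ℝ) (hT : 0 < T) (hM : 0 < M) :
    ∃ C : ℝ, ∀ nu mu : ℝ, nu ∈ Set.Ioc (0:ℝ) 1 → mu ∈ Set.Ioc (0:ℝ) 1 →
    ∀ (u B u0 B0 : ℝ → V3 → V3) (P P0 : ℝ → V3 → ℝ),
    ContDiff ℝ (⊤ : ℕ∞) (Function.uncurry u) → ContDiff ℝ (⊤ : ℕ∞) (Function.uncurry B) →
    ContDiff ℝ (⊤ : ℕ∞) (Function.uncurry P) → ContDiff ℝ (⊤ : ℕ∞) (Function.uncurry u0) →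
    ContDiff ℝ (⊤ : ℕ∞) (Function.uncurry B0) → ContDiff ℝ (⊤ : ℕ∞) (Function.uncurry P0) →
    (∀ t, hperV (u t)) → (∀ t, hperV (B t)) → (∀ t, hperS (P t)) →
    (∀ t, hperV (u0 t)) → (∀ t, hperV (B0 t)) → (∀ t, hperS (P0 t)) →
    -- the viscous MHD system on [0,T]
    (∀ t ∈ Set.Icc (0:ℝ) T, ∀ x, ∀ i : Fin 3,
      deriv (fun s => u s x i) t - nu * vlap (u t) x i
        + cross (vcurl (u t) x) (u t x) i + cross (B t x) (vcurl (B t) x) i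
        + grad (P t) x i = 0) →
    (∀ t ∈ Set.Icc (0:ℝ) T, ∀ x, vdiv (u t) x = 0) →
    (∀ t ∈ Set.Icc (0:ℝ) T, ∀ x, ∀ i : Fin 3,
      deriv (fun s => B s x i) t - mu * vlap (B t) x i
        = vcurl (fun y => cross (u t y) (B t y)) x i) →
    (∀ t ∈ Set.Icc (0:ℝ) T, ∀ x, vdiv (B t) x = 0) →
    -- boundary conditions for the viscous solution
    (∀ t ∈ Set.Icc (0:ℝ) T, ∀ x, onBdry x →
      u t x 2 = 0 ∧ pd 2 (fun y => u t y 0) x = 0 ∧ pd 2 (fun y => u t y 1) x = 0) →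
    (∀ t ∈ Set.Icc (0:ℝ) T, ∀ x, onBdry x → B t x 0 = 0 ∧ B t x 1 = 0) →
    (∀ t ∈ Set.Icc (0:ℝ) T, ∀ x, onBdry x → vlap (B t) x 0 = 0 ∧ vlap (B t) x 1 = 0) →
    (∀ t ∈ Set.Icc (0:ℝ) T, ∀ x, onBdry x →
      vcurl (vlap (u t)) x 0 = 0 ∧ vcurl (vlap (u t)) x 1 = 0) →
    -- the ideal MHD system on [0,T]
    (∀ t ∈ Set.Icc (0:ℝ) T, ∀ x, ∀ i : Fin 3,
      deriv (fun s => u0 s x i) t + cross (vcurl (u0 t) x) (u0 t x) i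
        + cross (B0 t x) (vcurl (B0 t) x) i + grad (P0 t) x i = 0) →
    (∀ t ∈ Set.Icc (0:ℝ) T, ∀ x, vdiv (u0 t) x = 0) →
    (∀ t ∈ Set.Icc (0:ℝ) T, ∀ x, ∀ i : Fin 3,
      deriv (fun s => B0 s x i) t = vcurl (fun y => cross (u0 t y) (B0 t y)) x i) →
    (∀ t ∈ Set.Icc (0:ℝ) T, ∀ x, vdiv (B0 t) x = 0) →
    -- boundary conditions for the ideal solution
    (∀ t ∈ Set.Icc (0:ℝ) T, ∀ x, onBdry x →
      u0 t x 2 = 0 ∧ vcurl (u0 t) x 0 = 0 ∧ vcurl (u0 t) x 1 = 0) →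
    (∀ t ∈ Set.Icc (0:ℝ) T, ∀ x, onBdry x → B0 t x 0 = 0 ∧ B0 t x 1 = 0) →
    (∀ t ∈ Set.Icc (0:ℝ) T, ∀ x, onBdry x →
      vlap (B0 t) x 0 = 0 ∧ vlap (B0 t) x 1 = 0) →
    -- same initial data on the slab
    (∀ x : V3, 0 ≤ x 2 → x 2 ≤ 1 → u 0 x = u0 0 x ∧ B 0 x = B0 0 x) →
    -- all spatial partial derivatives up to order 4 bounded by M on the slab
    (∀ t ∈ Set.Icc (0:ℝ) T, ∀ x : V3, 0 ≤ x 2 → x 2 ≤ 1 →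
      ∀ l : List (Fin 3), l.length ≤ 4 → ∀ i : Fin 3,
        |pdList l (fun y => u t y i) x| ≤ M ∧ |pdList l (fun y => B t y i) x| ≤ M ∧
        |pdList l (fun y => u0 t y i) x| ≤ M ∧ |pdList l (fun y => B0 t y i) x| ≤ M) →
    ∀ t ∈ Set.Icc (0:ℝ) T,
      (∫ x in Q3,
        (dot (u t x - u0 t x) (u t x - u0 t x)
          + dot (vlap (fun y => u t y - u0 t y) x) (vlap (fun y => u t y - u0 t y) x)
          + dot (B t x - B0 t x) (B t x - B0 t x)
          + dot (vlap (fun y => B t y - B0 t y) x) (vlap (fun y => B t y - B0 t y) x)))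
        ≤ C * (nu + mu) := by
  refine ⟨Real.exp (36288 * M * T), ?_⟩
  intro nu mu hnu hmu u B u0 B0 P P0 su sB sP su0 sB0 sP0 pu pB pP pu0 pB0 pP0
    eu du eB dB bu bB bB' _ eu0 du0 eB0 dB0 bu0 bB0 bB0' same0 bd
  have au := adm_comp u su pu
  have aB := adm_comp B sB pB
  have au0 := adm_comp u0 su0 pu0
  have aB0 := adm_comp B0 sB0 pB0
  have aP : Adm (fun z => P z.1 z.2) := ⟨sP, pP⟩
  have aP0 : Adm (fun z => P0 z.1 z.2) := ⟨sP0, pP0⟩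
  have aw := fun i => adm_sub (au i) (au0 i)
  have ab := fun i => adm_sub (aB i) (aB0 i)
  have hder := EN_deriv _ _ aw ab
  set E : ℝ → ℝ := fun s => II (EN (fun i => sl _ (aw i) s) (fun i => sl _ (ab i) s)) with hE
  have hE0 : E 0 = 0 := by
    apply EN_zero
    · intro i x h0 h1
      have := congrFun (same0 x h0.le h1.le).1 i
      show u 0 x i - u0 0 x i = 0
      rw [this, sub_self]
    · intro i x h0 h1
      have := congrFun (same0 x h0.le h1.le).2 i
      show B 0 x i - B0 0 x i = 0
      rw [this, sub_self]
  have hnu0 : 0 < nu := hnu.1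
  have hmu0 : 0 < mu := hmu.1
  have hgr := gron E _ (36288 * M) (9072 * M * (nu ^ 2 + mu ^ 2)) T (by positivity) hder hE0 (by
    intro t ht
    set U : Fin 3 → SPA := fun i => sl _ (au i) t with hU
    set Bt : Fin 3 → SPA := fun i => sl _ (aB i) t with hBt
    set U0 : Fin 3 → SPA := fun i => sl _ (au0 i) t with hU0
    set Bt0 : Fin 3 → SPA := fun i => sl _ (aB0 i) t with hBt0
    set p : SPA := sl _ aP t with hp
    set p0 : SPA := sl _ aP0 t with hp0
    have dU : ∑ k, DD k (U k) = 0 := by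
      rw [Fin.sum_univ_three]; exact Subtype.ext (funext fun x => du t ht x)
    have dBt : ∑ k, DD k (Bt k) = 0 := by
      rw [Fin.sum_univ_three]; exact Subtype.ext (funext fun x => dB t ht x)
    have dU0 : ∑ k, DD k (U0 k) = 0 := by
      rw [Fin.sum_univ_three]; exact Subtype.ext (funext fun x => du0 t ht x)
    have dBt0 : ∑ k, DD k (Bt0 k) = 0 := by
      rw [Fin.sum_univ_three]; exact Subtype.ext (funext fun x => dB0 t ht x)
    have hx0 : ∀ x ∈ Q3, 0 ≤ x 2 ∧ x 2 ≤ 1 := fun x hx => ⟨hx.1 2, hx.2 2⟩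
    have f1 : ∀ i, sl _ (au i).td t = nu • Lap (U i) - (Adv U (U i) - (1 / 2 : ℝ) • DD i (∑ k, U k * U k))
        + (Adv Bt (Bt i) - (1 / 2 : ℝ) • DD i (∑ k, Bt k * Bt k)) - DD i p := by
      intro i
      apply Subtype.ext
      funext x
      have h := eu t ht x i
      have hd : deriv (fun s => u s x i) t = (sl _ (au i).td t).1 x :=
        (hasDerivAt_slice (au i).1 t x).deriv
      have h1 : cross (vcurl (u t) x) (u t x) i = _ := br1 U x i
      have h2 : cross (B t x) (vcurl (B t) x) i = _ := br2 Bt x i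
      have h3 : vlap (u t) x i = (Lap (U i)).1 x := (Lap_ev (U i) x).symm
      have h4 : grad (P t) x i = (DD i p).1 x := rfl
      rw [hd, h1, h2, h3, h4] at h
      rw [ev_sub, ev_add, ev_sub, ev_smul]
      linarith
    have f2 : ∀ i, sl _ (au0 i).td t = - (Adv U0 (U0 i) - (1 / 2 : ℝ) • DD i (∑ k, U0 k * U0 k))
        + (Adv Bt0 (Bt0 i) - (1 / 2 : ℝ) • DD i (∑ k, Bt0 k * Bt0 k)) - DD i p0 := by
      intro i
      apply Subtype.ext
      funext x
      have h := eu0 t ht x i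
      have hd : deriv (fun s => u0 s x i) t = (sl _ (au0 i).td t).1 x :=
        (hasDerivAt_slice (au0 i).1 t x).deriv
      have h1 : cross (vcurl (u0 t) x) (u0 t x) i = _ := br1 U0 x i
      have h2 : cross (B0 t x) (vcurl (B0 t) x) i = _ := br2 Bt0 x i
      have h4 : grad (P0 t) x i = (DD i p0).1 x := rfl
      rw [hd, h1, h2, h4] at h
      rw [ev_sub, ev_add, ev_neg]
      linarith
    have f3 : ∀ i, sl _ (aB i).td t = mu • Lap (Bt i) + (Adv Bt (U i) - Adv U (Bt i)) := by
      intro i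
      apply Subtype.ext
      funext x
      have h := eB t ht x i
      have hd : deriv (fun s => B s x i) t = (sl _ (aB i).td t).1 x :=
        (hasDerivAt_slice (aB i).1 t x).deriv
      have h1 : vcurl (fun y => cross (u t y) (B t y)) x i = _ := br3 U Bt dU dBt x i
      have h3 : vlap (B t) x i = (Lap (Bt i)).1 x := (Lap_ev (Bt i) x).symm
      rw [hd, h1, h3] at h
      rw [ev_add, ev_smul]
      linarith
    have f4 : ∀ i, sl _ (aB0 i).td t = Adv Bt0 (U0 i) - Adv U0 (Bt0 i) := by
      intro i
      apply Subtype.ext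
      funext x
      have h := eB0 t ht x i
      have hd : deriv (fun s => B0 s x i) t = (sl _ (aB0 i).td t).1 x :=
        (hasDerivAt_slice (aB0 i).1 t x).deriv
      have h1 : vcurl (fun y => cross (u0 t y) (B0 t y)) x i = _ := br3 U0 Bt0 dU0 dBt0 x i
      rw [hd, h1] at h
      exact h
    have key := main_est M nu mu hM hnu0.le hmu0.le U Bt (fun i => U i - U0 i)
      (fun i => Bt i - Bt0 i) U0 Bt0 (fun i => sl _ (aw i).td t) (fun i => sl _ (ab i).td t)
      (p - p0 - (1 / 2 : ℝ) • (∑ k, U k * U k) + (1 / 2 : ℝ) • (∑ k, U0 k * U0 k)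
        + (1 / 2 : ℝ) • (∑ k, Bt k * Bt k) - (1 / 2 : ℝ) • (∑ k, Bt0 k * Bt0 k))
      dU dBt
      (by simp only [map_sub, Finset.sum_sub_distrib, dU, dU0, sub_zero])
      (by simp only [map_sub, Finset.sum_sub_distrib, dBt, dBt0, sub_zero])
      (fun x hx => (bu t ht x hx).1)
      (fun x hx => by
        show u t x 2 - u0 t x 2 = 0
        rw [(bu t ht x hx).1, (bu0 t ht x hx).1, sub_zero])
      (fun x hx => by
        have h1 : (DD 2 (U 0)).1 x = 0 := (bu t ht x hx).2.1
        have h2 : (DD 2 (U 1)).1 x = 0 := (bu t ht x hx).2.2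
        have c0 := tang (f := U0 2) (fun x hx => (bu0 t ht x hx).1) 0 (by decide) x hx
        have c1 := tang (f := U0 2) (fun x hx => (bu0 t ht x hx).1) 1 (by decide) x hx
        have h3 : (DD 1 (U0 2)).1 x - (DD 2 (U0 1)).1 x = 0 := (bu0 t ht x hx).2.1
        have h4 : (DD 2 (U0 0)).1 x - (DD 0 (U0 2)).1 x = 0 := (bu0 t ht x hx).2.2
        rw [map_sub, map_sub, ev_sub, ev_sub]
        constructor <;> linarith)
      (fun x hx => by
        show B t x 0 - B0 t x 0 = 0 ∧ B t x 1 - B0 t x 1 = 0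
        rw [(bB t ht x hx).1, (bB0 t ht x hx).1, (bB t ht x hx).2, (bB0 t ht x hx).2]
        simp)
      (fun x hx => by
        have h1 : lap (Bt 0).1 x = 0 := (bB' t ht x hx).1
        have h2 : lap (Bt 1).1 x = 0 := (bB' t ht x hx).2
        have h3 : lap (Bt0 0).1 x = 0 := (bB0' t ht x hx).1
        have h4 : lap (Bt0 1).1 x = 0 := (bB0' t ht x hx).2
        rw [map_sub, map_sub, ev_sub, ev_sub, Lap_ev, Lap_ev, Lap_ev, Lap_ev, h1, h2, h3, h4]
        simp)
      (fun i => by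
        have a1 := Adv_sub U U0 U U0 i
        have a2 := Adv_sub Bt Bt0 Bt Bt0 i
        rw [TD_sub (au i) (au0 i), f1, f2]
        simp only [map_add, map_sub, map_smul] at a1 a2 ⊢
        linear_combination a2 - a1)
      (fun i => by
        have a1 := Adv_sub U U0 Bt Bt0 i
        have a2 := Adv_sub Bt Bt0 U U0 i
        rw [TD_sub (aB i) (aB0 i), f3, f4]
        linear_combination a2 - a1)
      (fun x hx i => bdd_of fun l hl => (bd t ht x (hx0 x hx).1 (hx0 x hx).2 l hl i).1)
      (fun x hx i => bdd_of fun l hl => (bd t ht x (hx0 x hx).1 (hx0 x hx).2 l hl i).2.1)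
      (fun x hx i => bdd_of fun l hl => (bd t ht x (hx0 x hx).1 (hx0 x hx).2 l hl i).2.2.1)
      (fun x hx i => bdd_of fun l hl => (bd t ht x (hx0 x hx).1 (hx0 x hx).2 l hl i).2.2.2)
    have key2 := mul_le_mul_of_nonneg_left key (zero_le_two (α := ℝ))
    refine key2.trans (le_of_eq ?_)
    have hEt : E t = II (∑ i, ((U i - U0 i) * (U i - U0 i) + Lap (U i - U0 i) * Lap (U i - U0 i)
      + (Bt i - Bt0 i) * (Bt i - Bt0 i) + Lap (Bt i - Bt0 i) * Lap (Bt i - Bt0 i))) := rfl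
    rw [hEt]
    ring)
  intro t ht
  have hfin := hgr t ht
  have hEnergy : (∫ x in Q3,
        (dot (u t x - u0 t x) (u t x - u0 t x)
          + dot (vlap (fun y => u t y - u0 t y) x) (vlap (fun y => u t y - u0 t y) x)
          + dot (B t x - B0 t x) (B t x - B0 t x)
          + dot (vlap (fun y => B t y - B0 t y) x) (vlap (fun y => B t y - B0 t y) x))) = E t := by
    show _ = ∫ x in Q3, _
    congr 1
    funext x
    rw [EN, ev_sum, Fin.sum_univ_three]
    simp only [ev_add, ev_mul, Lap_ev]
    simp only [dot]
    have q1 : ∀ i, (sl _ (aw i) t).1 x = (u t x - u0 t x) i := fun i => rfl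
    have q2 : ∀ i, (sl _ (ab i) t).1 x = (B t x - B0 t x) i := fun i => rfl
    have q3 : ∀ i, lap (sl _ (aw i) t).1 x = vlap (fun y => u t y - u0 t y) x i := fun i => rfl
    have q4 : ∀ i, lap (sl _ (ab i) t).1 x = vlap (fun y => B t y - B0 t y) x i := fun i => rfl
    simp only [q1, q2, q3, q4]
    ring
  rw [hEnergy]
  refine hfin.trans ?_
  have hexp : Real.exp (36288 * M * t) - 1 ≤ Real.exp (36288 * M * T) := by
    have : Real.exp (36288 * M * t) ≤ Real.exp (36288 * M * T) := by
      apply Real.exp_le_exp.2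
      exact mul_le_mul_of_nonneg_left ht.2 (by positivity)
    linarith
  have hq : 9072 * M * (nu ^ 2 + mu ^ 2) / (36288 * M) ≤ nu + mu := by
    rw [div_le_iff₀ (by positivity)]
    have : nu ^ 2 + mu ^ 2 ≤ nu + mu := by nlinarith [hnu.2, hmu.2]
    nlinarith [mul_le_mul_of_nonneg_left this hM.le, mul_pos hM hnu0, mul_pos hM hmu0]
  have hq0 : 0 ≤ 9072 * M * (nu ^ 2 + mu ^ 2) / (36288 * M) := by positivity
  calc _ ≤ 9072 * M * (nu ^ 2 + mu ^ 2) / (36288 * M) * Real.exp (36288 * M * T) :=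
        mul_le_mul_of_nonneg_left hexp hq0
    _ ≤ (nu + mu) * Real.exp (36288 * M * T) :=
        mul_le_mul_of_nonneg_right hq (Real.exp_pos _).le
    _ = _ := by ring
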